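/- arXiv:2602.22874 — 2 statements merged into one kernel-verified Lean document; each statement's English description precedes it below -/
import Mathlib

section
/- Let t be a triangulation of a convex polygon with n ≥ 4 vertices, and let v₁, v₂, v₃ be vertices of t forming an ear of t such that v₂ is incident to the two boundary edges {v₁,v₂} and {v₂,v₃} of the ear. Then removing v₂ together with all edges incident to v₂ from t yields a triangulation t' of the convex (n−1)-gon on the remaining vertices, and the chord {v₁,v₃} is a boundary edge of t'. -/
/-! Fix the apex `v = v₂`. The map `removeVertexMap v` is a strictly increasing relabelling of the
remaining vertices, with inverse `insertVertexMap v`, so crossings are the same before and after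
removal (`crosses_insert_iff`). Hence the chords in the new family are chords of the smaller
polygon and do not cross.

The ear condition says that `v₁, v₃` are the two cyclic neighbours of `v` (`ear_neighbours`). Every
boundary edge of the smaller polygon therefore comes from a boundary edge of the original one,
except the edge joining the two neighbours of `v`, which comes from `{v₁, v₃}` in `t`.

For maximality, a chord outside the new family comes from a chord `e ∌ v` outside `t`, which is
crossed by some `f ∈ t`. If `v ∈ f`, then `f` is not crossed by `{v₁, v₃}`, which separates `v` from
all other vertices, so `f` is one of the two boundary edges at `v`; but those cross nothing. So `f`
survives the removal, and its image crosses the given chord. -/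

/-!
Triangulations of a convex polygon whose vertices are labelled `0, 1, …, n-1`
in order along the boundary (this labelling is the *linear representation*:
the vertices lie on the spine in this order, and the spine edges are the
boundary edges `{i, i+1}` for `0 ≤ i ≤ n-2`).
-/

/-- Two chords of a convex polygon cross: their endpoints interleave along the
boundary order. -/
def Crosses (e f : Finset ℕ) : Prop :=
  ∃ a b c d : ℕ, a < b ∧ c < d ∧ e = {a, b} ∧ f = {c, d} ∧
    ((a < c ∧ c < b ∧ b < d) ∨ (c < a ∧ a < d ∧ d < b))

/-- Boundary edges of the convex polygon with vertices `0, 1, …, n-1`. -/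
def BoundaryEdge (n : ℕ) (e : Finset ℕ) : Prop :=
  (∃ i : ℕ, i + 2 ≤ n ∧ e = {i, i + 1}) ∨ (2 ≤ n ∧ e = ({0, n - 1} : Finset ℕ))

/-- A chord of the convex `n`-gon: a 2-element subset of the vertex set. -/
def IsChord (n : ℕ) (e : Finset ℕ) : Prop :=
  e.card = 2 ∧ ∀ v ∈ e, v < n

/-- A triangulation of the convex `n`-gon: all boundary edges together with an
inclusion-maximal family of pairwise non-crossing diagonals. -/
def IsTriangulation (n : ℕ) (T : Set (Finset ℕ)) : Prop :=
  (∀ e ∈ T, IsChord n e) ∧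
  (∀ e : Finset ℕ, BoundaryEdge n e → e ∈ T) ∧
  (∀ e ∈ T, ∀ f ∈ T, ¬ Crosses e f) ∧
  (∀ e : Finset ℕ, IsChord n e → e ∉ T → ∃ f ∈ T, Crosses e f)

/-- `T'` is obtained from the triangulation `T` of the convex `n`-gon by a single
flip: one diagonal `e` of `T` is replaced by another diagonal `f` so that the
result is again a triangulation. -/
def Flip (n : ℕ) (T T' : Set (Finset ℕ)) : Prop :=
  IsTriangulation n T ∧ IsTriangulation n T' ∧
  ∃ e f : Finset ℕ, e ∈ T ∧ f ∉ T ∧ T' = insert f (T \ {e})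

/-- A flip sequence of length `ℓ` from `T` to `T'` in the convex `n`-gon. -/
def IsFlipSeq (n : ℕ) (T T' : Set (Finset ℕ)) (ℓ : ℕ) (g : ℕ → Set (Finset ℕ)) : Prop :=
  g 0 = T ∧ g ℓ = T' ∧ ∀ i, i < ℓ → Flip n (g i) (g (i + 1))

/-- The flip distance between two triangulations of the convex `n`-gon:
the minimal length of a flip sequence between them. -/
noncomputable def flipDist (n : ℕ) (T T' : Set (Finset ℕ)) : ℕ :=
  sInf {ℓ : ℕ | ∃ g : ℕ → Set (Finset ℕ), IsFlipSeq n T T' ℓ g}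

/-- `{x, y, z}` is a triangle of the triangulation `T` (its three chords belong to
`T`; for triangulations of a convex polygon this means it is a face). -/
def IsTriangle (T : Set (Finset ℕ)) (x y z : ℕ) : Prop :=
  x ≠ y ∧ y ≠ z ∧ x ≠ z ∧
  ({x, y} : Finset ℕ) ∈ T ∧ ({y, z} : Finset ℕ) ∈ T ∧ ({x, z} : Finset ℕ) ∈ T

/-- `p = (a, u, u')` encodes a triangle pair of `(T, T')`: the triangle
`{a, a+1, u}` of `T` and the triangle `{a, a+1, u'}` of `T'` share the spine edge
`{a, a+1}`, and each of the two triangles has exactly one edge on the spine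
(the apex is not consecutive with the spine edge). -/
def IsTrianglePair (n : ℕ) (T T' : Set (Finset ℕ)) (p : ℕ × ℕ × ℕ) : Prop :=
  p.1 + 2 ≤ n ∧ p.2.1 < n ∧ p.2.2 < n ∧
  IsTriangle T p.1 (p.1 + 1) p.2.1 ∧ IsTriangle T' p.1 (p.1 + 1) p.2.2 ∧
  p.2.1 + 1 ≠ p.1 ∧ p.2.1 ≠ p.1 + 2 ∧ p.2.2 + 1 ≠ p.1 ∧ p.2.2 ≠ p.1 + 2

/-- The set `Γ` of triangle pairs of `(T, T')`. -/
def Gamma (n : ℕ) (T T' : Set (Finset ℕ)) : Set (ℕ × ℕ × ℕ) :=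
  {p | IsTrianglePair n T T' p}

/-- The left endpoints of the spine edges that carry a triangle pair. -/
def leftSet (n : ℕ) (T T' : Set (Finset ℕ)) : Set ℕ :=
  {a : ℕ | ∃ u u' : ℕ, (a, u, u') ∈ Gamma n T T'}

/-- The embedding of the original vertices into the vertex set of the β-blow-up:
`β` new subdivision vertices are inserted inside each spine edge carrying a
triangle pair. -/
noncomputable def emb (n : ℕ) (T T' : Set (Finset ℕ)) (β : ℕ) (i : ℕ) : ℕ :=
  i + β * ({a ∈ leftSet n T T' | a < i}).ncard

/-- Number of vertices of the blown-up polygon. -/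
noncomputable def blowSize (n : ℕ) (T T' : Set (Finset ℕ)) (β : ℕ) : ℕ :=
  n + β * (Gamma n T T').ncard

/-- The set `V(Δ)` of the `β` new subdivision vertices of the spine edge of the
pair `p`, in the β-blow-up. -/
noncomputable def subVerts (n : ℕ) (T T' : Set (Finset ℕ)) (β : ℕ) (p : ℕ × ℕ × ℕ) : Set ℕ :=
  {v : ℕ | ∃ k : ℕ, 1 ≤ k ∧ k ≤ β ∧ v = emb n T T' β p.1 + k}

/-- The fan `Λ(Δ)` of the pair `p` in the β-blow-up of `T`: the `β` edges from
the apex of `Δ` to the subdivision vertices `V(Δ)`. -/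
noncomputable def fanT (n : ℕ) (T T' : Set (Finset ℕ)) (β : ℕ) (p : ℕ × ℕ × ℕ) : Set (Finset ℕ) :=
  {E | ∃ k : ℕ, 1 ≤ k ∧ k ≤ β ∧
    E = ({emb n T T' β p.2.1, emb n T T' β p.1 + k} : Finset ℕ)}

/-- The fan `Λ(Δ')` of the pair `p` in the β-blow-up of `T'`. -/
noncomputable def fanT' (n : ℕ) (T T' : Set (Finset ℕ)) (β : ℕ) (p : ℕ × ℕ × ℕ) : Set (Finset ℕ) :=
  {E | ∃ k : ℕ, 1 ≤ k ∧ k ≤ β ∧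
    E = ({emb n T T' β p.2.2, emb n T T' β p.1 + k} : Finset ℕ)}

/-- The β-blow-up `βT` of `T`: images of the edges of `T` that are not subdivided,
the subdivided boundary pieces, and the fans `Λ(Δ)`. -/
noncomputable def blowT (n : ℕ) (T T' : Set (Finset ℕ)) (β : ℕ) : Set (Finset ℕ) :=
  {E | ∃ i j : ℕ, ({i, j} : Finset ℕ) ∈ T ∧
      (¬ ∃ a ∈ leftSet n T T', ({i, j} : Finset ℕ) = {a, a + 1}) ∧
      E = ({emb n T T' β i, emb n T T' β j} : Finset ℕ)} ∪
  {E | ∃ a ∈ leftSet n T T', ∃ k : ℕ, k ≤ β ∧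
      E = ({emb n T T' β a + k, emb n T T' β a + k + 1} : Finset ℕ)} ∪
  ⋃ p ∈ Gamma n T T', fanT n T T' β p

/-- The β-blow-up `βT'` of `T'`. -/
noncomputable def blowT' (n : ℕ) (T T' : Set (Finset ℕ)) (β : ℕ) : Set (Finset ℕ) :=
  {E | ∃ i j : ℕ, ({i, j} : Finset ℕ) ∈ T' ∧
      (¬ ∃ a ∈ leftSet n T T', ({i, j} : Finset ℕ) = {a, a + 1}) ∧
      E = ({emb n T T' β i, emb n T T' β j} : Finset ℕ)} ∪
  {E | ∃ a ∈ leftSet n T T', ∃ k : ℕ, k ≤ β ∧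
      E = ({emb n T T' β a + k, emb n T T' β a + k + 1} : Finset ℕ)} ∪
  ⋃ p ∈ Gamma n T T', fanT' n T T' β p

/-- Crossing of two chords `{a,b}` and `{c,d}` of a "polygon" with vertices on the
rational line (used to express crossing of fan edges, whose subdivision endpoints
are represented by midpoints of spine edges). -/
def crossQ (a b c d : ℚ) : Prop :=
  (min a b < min c d ∧ min c d < max a b ∧ max a b < max c d) ∨
  (min c d < min a b ∧ min a b < max c d ∧ max c d < max a b)

/-- The directed edge `p → q` of the conflict graph `H(T,T')`: the fan edges of
`Λ(Δ_p)` (from the apex of `Δ_p` to the inside of its spine edge) cross the fan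
edges of `Λ(Δ'_q)`. -/
def ConflictEdge (n : ℕ) (T T' : Set (Finset ℕ)) (p q : ℕ × ℕ × ℕ) : Prop :=
  p ∈ Gamma n T T' ∧ q ∈ Gamma n T T' ∧ p ≠ q ∧
  crossQ (p.2.1 : ℚ) ((p.1 : ℚ) + 1 / 2) (q.2.2 : ℚ) ((q.1 : ℚ) + 1 / 2)

/-- `S` contains a directed cycle of the directed graph with edge relation `E`. -/
def HasDicycleIn {α : Type*} (E : α → α → Prop) (S : Set α) : Prop :=
  ∃ (k : ℕ) (f : ℕ → α), 0 < k ∧ (∀ i, i ≤ k → f i ∈ S) ∧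
    (∀ i, i < k → E (f i) (f (i + 1))) ∧ f k = f 0

/-- `ac(H)`: the maximum cardinality of a subset of `Γ` inducing no directed cycle
in the conflict graph `H(T,T')`. -/
noncomputable def acNum (n : ℕ) (T T' : Set (Finset ℕ)) : ℕ :=
  sSup {m : ℕ | ∃ S : Set (ℕ × ℕ × ℕ), S ⊆ Gamma n T T' ∧
    ¬ HasDicycleIn (ConflictEdge n T T') S ∧ S.ncard = m}

/-- `gone(Δ)` for the flip sequence `g`: the least index `t` such that `g t`
contains no edge of the fan `Λ(Δ)`. -/
noncomputable def gone (n : ℕ) (T T' : Set (Finset ℕ)) (β : ℕ)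
    (g : ℕ → Set (Finset ℕ)) (p : ℕ × ℕ × ℕ) : ℕ :=
  sInf {t : ℕ | ∀ E ∈ fanT n T T' β p, E ∉ g t}

/-- The pair `p` is *direct* with respect to the flip sequence `g`: some
triangulation `g a` with `a ≤ gone(Δ)` contains an edge of `Λ(Δ')`. -/
def DirectPair (n : ℕ) (T T' : Set (Finset ℕ)) (β : ℕ)
    (g : ℕ → Set (Finset ℕ)) (p : ℕ × ℕ × ℕ) : Prop :=
  ∃ a : ℕ, a ≤ gone n T T' β g p ∧ ∃ E ∈ fanT' n T T' β p, E ∈ g a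

/-- Reachability in the graph with vertex set `V` and edge set `Ed`. -/
def GReach (V : Set ℕ) (Ed : Set (Finset ℕ)) : ℕ → ℕ → Prop :=
  Relation.ReflTransGen (fun u v => u ∈ V ∧ v ∈ V ∧ ({u, v} : Finset ℕ) ∈ Ed)

/-- An *above* pair: both apexes lie to the left of the spine edge,
`u < u' < a < a+1`. -/
def AbovePair (p : ℕ × ℕ × ℕ) : Prop := p.2.1 < p.2.2 ∧ p.2.2 < p.1

/-- A *below* pair: both apexes lie to the right of the spine edge,
`a < a+1 < u < u'`. -/
def BelowPair (p : ℕ × ℕ × ℕ) : Prop := p.1 + 1 < p.2.1 ∧ p.2.1 < p.2.2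

/-- A *crossing* pair: `u' < a < a+1 < u`. -/
def CrossingPair (p : ℕ × ℕ × ℕ) : Prop := p.2.2 < p.1 ∧ p.1 + 1 < p.2.1

/-- Relabelling of the vertices after removal of the vertex `v`: vertices above `v`
are shifted down by one, preserving the boundary cyclic order. -/
def removeVertexMap (v x : ℕ) : ℕ := if x < v then x else x - 1

theorem pair_eq_of_lt {a b c d : ℕ} (hab : a < b) (hcd : c < d)
    (h : ({a, b} : Finset ℕ) = {c, d}) : a = c ∧ b = d := by
  have h1 : a ∈ ({c, d} : Finset ℕ) := h ▸ (by simp)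
  have h2 : b ∈ ({c, d} : Finset ℕ) := h ▸ (by simp)
  simp only [Finset.mem_insert, Finset.mem_singleton] at h1 h2
  omega

theorem crosses_pair_iff {a b c d : ℕ} (hab : a < b) (hcd : c < d) :
    Crosses {a, b} {c, d} ↔ (a < c ∧ c < b ∧ b < d) ∨ (c < a ∧ a < d ∧ d < b) := by
  constructor
  · rintro ⟨a', b', c', d', h1, h2, h3, h4, h5⟩
    obtain ⟨rfl, rfl⟩ := pair_eq_of_lt hab h1 h3
    obtain ⟨rfl, rfl⟩ := pair_eq_of_lt hcd h2 h4
    exact h5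
  · exact fun h => ⟨a, b, c, d, hab, hcd, rfl, rfl, h⟩

theorem isChord_iff {n : ℕ} {e : Finset ℕ} :
    IsChord n e ↔ ∃ a b : ℕ, a < b ∧ b < n ∧ e = {a, b} := by
  constructor
  · rintro ⟨h, hn⟩
    obtain ⟨x, y, hxy, rfl⟩ := Finset.card_eq_two.mp h
    have hx := hn x (by simp)
    have hy := hn y (by simp)
    rcases lt_or_gt_of_ne hxy with h | h
    · exact ⟨x, y, h, hy, rfl⟩
    · exact ⟨y, x, h, hx, Finset.pair_comm x y⟩
  · rintro ⟨a, b, hab, hb, rfl⟩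
    refine ⟨Finset.card_pair hab.ne, fun v hv => ?_⟩
    simp only [Finset.mem_insert, Finset.mem_singleton] at hv
    omega

theorem boundaryEdge_pair_iff {n a b : ℕ} (hn : 2 ≤ n) (hab : a < b) :
    BoundaryEdge n {a, b} ↔ (b = a + 1 ∧ b < n) ∨ (a = 0 ∧ b = n - 1) := by
  constructor
  · rintro (⟨i, hi, h⟩ | ⟨_, h⟩)
    · have := pair_eq_of_lt hab (by omega) h
      omega
    · exact Or.inr (pair_eq_of_lt hab (by omega) h)
  · rintro (⟨rfl, h⟩ | ⟨rfl, rfl⟩)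
    · exact Or.inl ⟨a, by omega, rfl⟩
    · exact Or.inr ⟨hn, rfl⟩

/-- The inverse of `removeVertexMap v`: the increasing enumeration of the naturals other
than `v`. -/
def insertVertexMap (v x : ℕ) : ℕ := if x < v then x else x + 1

theorem insertVertexMap_ne (v x : ℕ) : insertVertexMap v x ≠ v := by
  unfold insertVertexMap; split <;> omega

theorem insertVertexMap_lt_iff (v : ℕ) {x y : ℕ} :
    insertVertexMap v x < insertVertexMap v y ↔ x < y := by
  unfold insertVertexMap; split <;> split <;> omega

theorem removeVertexMap_insertVertexMap (v x : ℕ) :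
    removeVertexMap v (insertVertexMap v x) = x := by
  unfold insertVertexMap removeVertexMap; split_ifs <;> omega

theorem exists_insertVertexMap_eq {v x : ℕ} (h : x ≠ v) : ∃ y, insertVertexMap v y = x := by
  refine ⟨removeVertexMap v x, ?_⟩
  unfold insertVertexMap removeVertexMap; split_ifs <;> omega

theorem crosses_insert_iff (v : ℕ) {a b c d : ℕ} (hab : a < b) (hcd : c < d) :
    Crosses {insertVertexMap v a, insertVertexMap v b} {insertVertexMap v c, insertVertexMap v d} ↔
      Crosses {a, b} {c, d} := by
  rw [crosses_pair_iff ((insertVertexMap_lt_iff v).2 hab) ((insertVertexMap_lt_iff v).2 hcd),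
    crosses_pair_iff hab hcd]
  simp only [insertVertexMap_lt_iff]

/-- The chords of `t` avoiding `v`, relabelled, are the pairs whose `insertVertexMap`-image lies
in `t`. -/
theorem mem_removed_iff {n v : ℕ} {t : Set (Finset ℕ)} (hc : ∀ e ∈ t, IsChord n e)
    {E : Finset ℕ} :
    (∃ e ∈ t, v ∉ e ∧ E = e.image (removeVertexMap v)) ↔
      ∃ a b : ℕ, a < b ∧ E = {a, b} ∧ {insertVertexMap v a, insertVertexMap v b} ∈ t := by
  constructor
  · rintro ⟨e, he, hv, rfl⟩
    obtain ⟨x, y, hxy, -, rfl⟩ := isChord_iff.1 (hc e he)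
    simp only [Finset.mem_insert, Finset.mem_singleton, not_or] at hv
    obtain ⟨a, rfl⟩ := exists_insertVertexMap_eq (Ne.symm hv.1)
    obtain ⟨b, rfl⟩ := exists_insertVertexMap_eq (Ne.symm hv.2)
    exact ⟨a, b, (insertVertexMap_lt_iff v).1 hxy,
      by simp [Finset.image_insert, removeVertexMap_insertVertexMap], he⟩
  · rintro ⟨a, b, -, rfl, h⟩
    refine ⟨_, h, ?_, by simp [Finset.image_insert, removeVertexMap_insertVertexMap]⟩
    simp [(insertVertexMap_ne v _).symm]

/-- The two endpoints of an ear other than its apex `v` are the cyclic neighbours of `v`; the three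
alternatives are an interior label, `v = 0` and `v = n - 1`. -/
theorem ear_neighbours {n x v y : ℕ} (hn : 4 ≤ n) (hxv : x ≠ v) (hvy : v ≠ y) (hxy : x ≠ y)
    (h₁ : BoundaryEdge n {x, v}) (h₂ : BoundaryEdge n {v, y}) :
    ∃ p q : ℕ, ({x, y} : Finset ℕ) = {p, q} ∧
      ((p + 1 = v ∧ q = v + 1 ∧ q < n) ∨ (v = 0 ∧ p = 1 ∧ q = n - 1) ∨
        (v = n - 1 ∧ p = 0 ∧ q = n - 2)) := by
  have key : ∀ {a b : ℕ}, a ≠ b → BoundaryEdge n {a, b} →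
      (b = a + 1 ∧ b < n) ∨ (a = b + 1 ∧ a < n) ∨ (a = 0 ∧ b = n - 1) ∨
        (b = 0 ∧ a = n - 1) := by
    intro a b hab h
    rcases lt_or_gt_of_ne hab with hlt | hlt
    · have := (boundaryEdge_pair_iff (by omega) hlt).1 h
      omega
    · rw [Finset.pair_comm] at h
      have := (boundaryEdge_pair_iff (by omega) hlt).1 h
      omega
  have k₁ := key hxv h₁
  have k₂ := key hvy h₂
  rcases lt_or_gt_of_ne hxy with hlt | hlt
  · exact ⟨x, y, rfl, by omega⟩
  · exact ⟨y, x, Finset.pair_comm x y, by omega⟩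

/-- Removing the apex `v₂` of an ear `v₁v₂v₃` of a triangulation
`t` of a convex `n`-gon (`n ≥ 4`), together with its two incident edges, yields a
triangulation of the convex `(n−1)`-gon on the remaining vertices, in which the
chord `{v₁, v₃}` is a boundary edge. -/
theorem ear_removal_triangulation
    (n : ℕ) (hn : 4 ≤ n) (t : Set (Finset ℕ)) (ht : IsTriangulation n t)
    (v₁ v₂ v₃ : ℕ) (htri : IsTriangle t v₁ v₂ v₃)
    (hb₁ : BoundaryEdge n ({v₁, v₂} : Finset ℕ))
    (hb₂ : BoundaryEdge n ({v₂, v₃} : Finset ℕ)) :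
    IsTriangulation (n - 1)
        {E | ∃ e ∈ t, v₂ ∉ e ∧ E = e.image (removeVertexMap v₂)} ∧
    BoundaryEdge (n - 1)
        (({v₁, v₃} : Finset ℕ).image (removeVertexMap v₂)) := by
  obtain ⟨hc, hbd, hnc, hmax⟩ := ht
  obtain ⟨hne₁, hne₂, hne₃, -, -, hear⟩ := htri
  obtain ⟨p, q, hpq, hcase⟩ := ear_neighbours hn hne₁ hne₂ hne₃ hb₁ hb₂
  rw [hpq] at hear ⊢
  clear hpq hb₁ hb₂ hne₁ hne₂ hne₃
  have hlt : p < q := by omega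
  refine ⟨⟨?_, ?_, ?_, ?_⟩, ?_⟩
  · intro E hE
    obtain ⟨a, b, hab, rfl, h⟩ := (mem_removed_iff hc).1 hE
    refine isChord_iff.2 ⟨a, b, hab, ?_, rfl⟩
    have h1 := (hc _ h).2 (insertVertexMap v₂ b) (by simp)
    have hv : v₂ < n := by omega
    unfold insertVertexMap at h1
    split at h1 <;> omega
  · intro E hE
    refine (mem_removed_iff hc).2 ?_
    obtain ⟨a, b, hab, hE', rfl⟩ : ∃ a b : ℕ, a < b ∧
        ((b = a + 1 ∧ b < n - 1) ∨ (a = 0 ∧ b = n - 1 - 1)) ∧ E = {a, b} := by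
      rcases hE with ⟨i, hi, rfl⟩ | ⟨-, rfl⟩
      · exact ⟨i, i + 1, by omega, by omega, rfl⟩
      · exact ⟨0, n - 1 - 1, by omega, by omega, rfl⟩
    refine ⟨a, b, hab, rfl, ?_⟩
    have hlt' := (insertVertexMap_lt_iff v₂).2 hab
    -- Either the preimage is a boundary edge, or its endpoints are the neighbours of `v₂`.
    have : (insertVertexMap v₂ a = p ∧ insertVertexMap v₂ b = q) ∨
        ((insertVertexMap v₂ b = insertVertexMap v₂ a + 1 ∧ insertVertexMap v₂ b < n) ∨
          (insertVertexMap v₂ a = 0 ∧ insertVertexMap v₂ b = n - 1)) := by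
      unfold insertVertexMap
      split_ifs <;> omega
    rcases this with ⟨h1, h2⟩ | h
    · rwa [h1, h2]
    · exact hbd _ ((boundaryEdge_pair_iff (by omega) hlt').2 h)
  · intro E hE F hF hEF
    obtain ⟨a, b, hab, rfl, h⟩ := (mem_removed_iff hc).1 hE
    obtain ⟨c, d, hcd, rfl, h'⟩ := (mem_removed_iff hc).1 hF
    exact hnc _ h _ h' ((crosses_insert_iff v₂ hab hcd).2 hEF)
  · intro E hE hEt
    obtain ⟨a, b, hab, hb, rfl⟩ := isChord_iff.1 hE
    have hlt' := (insertVertexMap_lt_iff v₂).2 hab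
    have hbn : insertVertexMap v₂ b < n := by
      unfold insertVertexMap; split <;> omega
    obtain ⟨f, hf, hcr⟩ := hmax {insertVertexMap v₂ a, insertVertexMap v₂ b}
      (isChord_iff.2 ⟨_, _, hlt', hbn, rfl⟩)
      (fun h => hEt ((mem_removed_iff hc).2 ⟨a, b, hab, rfl, h⟩))
    obtain ⟨x, y, hxy, hyn, rfl⟩ := isChord_iff.1 (hc f hf)
    have hx : x ≠ v₂ ∧ y ≠ v₂ := by
      have h1 := hnc _ hear _ hf
      rw [crosses_pair_iff hlt hxy] at h1
      have h2 := (crosses_pair_iff hlt' hxy).1 hcr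
      have ha := insertVertexMap_ne v₂ a
      have hb := insertVertexMap_ne v₂ b
      omega
    obtain ⟨c, rfl⟩ := exists_insertVertexMap_eq hx.1
    obtain ⟨d, rfl⟩ := exists_insertVertexMap_eq hx.2
    have hcd := (insertVertexMap_lt_iff v₂).1 hxy
    exact ⟨{c, d}, (mem_removed_iff hc).2 ⟨c, d, hcd, rfl, hf⟩,
      (crosses_insert_iff v₂ hab hcd).1 hcr⟩
  · have : ({p, q} : Finset ℕ).image (removeVertexMap v₂) =
        {removeVertexMap v₂ p, removeVertexMap v₂ q} := by simp [Finset.image_insert]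
    rw [this]
    have h : removeVertexMap v₂ p < removeVertexMap v₂ q ∧
        ((removeVertexMap v₂ q = removeVertexMap v₂ p + 1 ∧ removeVertexMap v₂ q < n - 1) ∨
        (removeVertexMap v₂ p = 0 ∧ removeVertexMap v₂ q = n - 1 - 1)) := by
      unfold removeVertexMap
      split_ifs <;> omega
    exact (boundaryEdge_pair_iff (by omega) h.1).2 h.2
end

section
/- Let t be a triangulation of a convex n-gon with n ≥ 4, and consider the graph obtained from t by deleting all boundary edges (keeping all n vertices). Then the connected components of this graph are: exactly one component containing all diagonals of t and all their endpoints, and isolated vertices, where the isolated vertices are exactly the vertices of t incident to two boundary edges, i.e., the apexes of ears of t. -/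
/-- `v` is the apex of an ear of the triangulation `t` of the convex `n`-gon:
`v` belongs to a triangle of `t` whose two edges at `v` are boundary edges. -/
def IsEarApex (n : ℕ) (t : Set (Finset ℕ)) (v : ℕ) : Prop :=
  ∃ v₁ v₃ : ℕ, IsTriangle t v₁ v v₃ ∧
    BoundaryEdge n ({v₁, v} : Finset ℕ) ∧ BoundaryEdge n ({v, v₃} : Finset ℕ)

namespace BoundaryDeleted

/-- The chord `{a, b}`, written with `a < b`, is a diagonal of `t`. -/
def Diag (n : ℕ) (t : Set (Finset ℕ)) (a b : ℕ) : Prop :=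
  a + 1 < b ∧ b < n ∧ ¬ (a = 0 ∧ b + 1 = n) ∧ ({a, b} : Finset ℕ) ∈ t

/-! ### Chords as ordered pairs -/

theorem pair_eq_pair {a b c d : ℕ} (h : ({a, b} : Finset ℕ) = {c, d}) :
    (a = c ∧ b = d) ∨ (a = d ∧ b = c) := by
  have h1 := Finset.ext_iff.mp h a
  have h2 := Finset.ext_iff.mp h b
  have h3 := Finset.ext_iff.mp h c
  have h4 := Finset.ext_iff.mp h d
  simp only [Finset.mem_insert, Finset.mem_singleton, true_or, or_true, true_iff, iff_true]
    at h1 h2 h3 h4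
  omega

theorem boundaryEdge_pair {n a b : ℕ} (hn : 4 ≤ n) :
    BoundaryEdge n {a, b} ↔ (a + 1 = b ∧ b < n) ∨ (b + 1 = a ∧ a < n) ∨
      (a = 0 ∧ b + 1 = n) ∨ (b = 0 ∧ a + 1 = n) := by
  constructor
  · rintro (⟨i, hi, h⟩ | ⟨-, h⟩) <;> rcases pair_eq_pair h with h | h <;> omega
  · rintro (⟨rfl, h⟩ | ⟨rfl, h⟩ | ⟨rfl, rfl⟩ | ⟨rfl, rfl⟩)
    · exact Or.inl ⟨a, by omega, rfl⟩
    · exact Or.inl ⟨b, by omega, Finset.pair_comm _ _⟩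
    · exact Or.inr ⟨by omega, by simp⟩
    · exact Or.inr ⟨by omega, by simp [Finset.pair_comm]⟩

section Triangulation

variable {n : ℕ} {t : Set (Finset ℕ)}

theorem lt_of_mem (ht : IsTriangulation n t) {a b : ℕ} (h : ({a, b} : Finset ℕ) ∈ t) :
    a < n ∧ b < n ∧ a ≠ b := by
  obtain ⟨h1, h2⟩ := ht.1 _ h
  refine ⟨h2 a (by simp), h2 b (by simp), ?_⟩
  rintro rfl
  simp at h1

theorem exists_pair (ht : IsTriangulation n t) {e : Finset ℕ} {x : ℕ} (he : e ∈ t) (hx : x ∈ e) :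
    ∃ y, e = {x, y} := by
  obtain ⟨p, q, -, rfl⟩ := Finset.card_eq_two.mp (ht.1 _ he).1
  simp only [Finset.mem_insert, Finset.mem_singleton] at hx
  rcases hx with rfl | rfl
  · exact ⟨q, rfl⟩
  · exact ⟨p, Finset.pair_comm _ _⟩

theorem not_interleave (ht : IsTriangulation n t) {a b c d : ℕ} (h : ({a, b} : Finset ℕ) ∈ t)
    (h' : ({c, d} : Finset ℕ) ∈ t) : ¬ (a < c ∧ c < b ∧ b < d) := fun hh =>
  ht.2.2.1 _ h _ h' ⟨a, b, c, d, by omega, by omega, rfl, rfl, Or.inl hh⟩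

/-- Maximality of a triangulation, in terms of ordered endpoints. -/
theorem mem_or_interleave (ht : IsTriangulation n t) {a b : ℕ} (hab : a < b) (hb : b < n) :
    ({a, b} : Finset ℕ) ∈ t ∨ ∃ x y, ({x, y} : Finset ℕ) ∈ t ∧
      ((a < x ∧ x < b ∧ b < y) ∨ (x < a ∧ a < y ∧ y < b)) := by
  by_contra! hcon
  obtain ⟨h, h'⟩ := hcon
  obtain ⟨f, hf, p, q, x, y, hpq, hxy, he, rfl, hc⟩ := ht.2.2.2 {a, b}
    ⟨Finset.card_pair hab.ne, by
      intro v hv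
      simp only [Finset.mem_insert, Finset.mem_singleton] at hv
      omega⟩ h
  have := h' x y hf
  rcases pair_eq_pair he with h | h <;> omega

theorem side_mem (hn : 4 ≤ n) (ht : IsTriangulation n t) {a b : ℕ}
    (h : (a + 1 = b ∧ b < n) ∨ (b + 1 = a ∧ a < n) ∨ (a = 0 ∧ b + 1 = n) ∨ (b = 0 ∧ a + 1 = n)) :
    ({a, b} : Finset ℕ) ∈ t :=
  ht.2.1 _ ((boundaryEdge_pair hn).mpr h)

/-! ### Triangles of a triangulation -/

/-- Every edge `{a, b}` of a triangulation with `a + 1 < b` has a triangle on the side of the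
vertices between `a` and `b`. -/
theorem exists_apex (hn : 4 ≤ n) (ht : IsTriangulation n t) {a b : ℕ} (hab : a + 1 < b)
    (h : ({a, b} : Finset ℕ) ∈ t) :
    ∃ c, a < c ∧ c < b ∧ ({a, c} : Finset ℕ) ∈ t ∧ ({c, b} : Finset ℕ) ∈ t := by
  classical
  have hb := (lt_of_mem ht h).2.1
  let P : ℕ → Prop := fun c => a < c ∧ c < b ∧ ({a, c} : Finset ℕ) ∈ t
  have h1 : P (a + 1) := ⟨by omega, hab, side_mem hn ht (by omega)⟩
  obtain ⟨hc1, hc2, hc3⟩ : P (Nat.findGreatest P b) :=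
    Nat.findGreatest_spec (P := P) (by omega) h1
  have hmax : ∀ y, Nat.findGreatest P b < y → y < b → ({a, y} : Finset ℕ) ∉ t :=
    fun y hy hyb hm => Nat.findGreatest_is_greatest hy hyb.le ⟨by omega, hyb, hm⟩
  generalize Nat.findGreatest P b = c at *
  refine ⟨c, hc1, hc2, hc3, ?_⟩
  rcases mem_or_interleave ht hc2 hb with h' | ⟨x, y, hxy, hc⟩
  · exact h'
  · exfalso
    have i1 := not_interleave ht h hxy
    have i2 := not_interleave ht hxy h
    have i3 := not_interleave ht hc3 hxy
    have hxa : x = a := by omega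
    subst hxa
    exact hmax y (by omega) (by omega) hxy

theorem chord_split (ht : IsTriangulation n t) {a b c x y : ℕ} (hac : ({a, c} : Finset ℕ) ∈ t)
    (hcb : ({c, b} : Finset ℕ) ∈ t) (hxy : ({x, y} : Finset ℕ) ∈ t) (hx : a ≤ x) (hy : y ≤ b) :
    (x = a ∧ y = b) ∨ y ≤ c ∨ c ≤ x := by
  have := not_interleave ht hac hxy
  have := not_interleave ht hxy hcb
  omega

/-! ### Connectedness of the diagonals -/

/-- Reachability in the graph with all boundary edges deleted. -/
abbrev Reach (n : ℕ) (t : Set (Finset ℕ)) : ℕ → ℕ → Prop :=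
  GReach {v : ℕ | v < n} {e ∈ t | ¬ BoundaryEdge n e}

theorem Reach.symm {x y : ℕ} (h : Reach n t x y) : Reach n t y x := by
  induction h with
  | refl => exact Relation.ReflTransGen.refl
  | tail _ h ih =>
    obtain ⟨hu, hv, huv⟩ := h
    exact Relation.ReflTransGen.head ⟨hv, hu, by rwa [Finset.pair_comm]⟩ ih

theorem Diag.reach (hn : 4 ≤ n) {a b : ℕ} (h : Diag n t a b) : Reach n t a b := by
  obtain ⟨h1, h2, h3, h4⟩ := h
  refine Relation.ReflTransGen.single ⟨?_, h2, h4, ?_⟩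
  · change a < n
    omega
  · rw [boundaryEdge_pair hn]
    omega

/-- All diagonals on the side of `{a, b}` away from the edge `{0, n - 1}` are connected to `a`. -/
theorem reach_of_diag (hn : 4 ≤ n) (ht : IsTriangulation n t) (k : ℕ) :
    ∀ a b, b - a ≤ k → Diag n t a b → ∀ x y, a ≤ x → y ≤ b → Diag n t x y → Reach n t a x := by
  induction k with
  | zero =>
    intro a b hk h
    have := h.1
    omega
  | succ k ih =>
    intro a b hk h x y hx hy hxy
    obtain ⟨c, hac, hcb, h1, h2⟩ := exists_apex hn ht h.1 h.2.2.2
    have hlt := h.2.1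
    have hne := h.2.2.1
    have hxy1 := hxy.1
    rcases chord_split ht h1 h2 hxy.2.2.2 hx hy with ⟨rfl, -⟩ | hyc | hcx
    · exact Relation.ReflTransGen.refl
    · exact ih a c (by omega) ⟨by omega, by omega, by omega, h1⟩ x y hx hyc hxy
    · have hd : Diag n t c b := ⟨by omega, by omega, by omega, h2⟩
      exact (h.reach hn).trans
        ((hd.reach hn).symm.trans (ih c b (by omega) hd x y hcx hy hxy))

theorem exists_hub (hn : 4 ≤ n) (ht : IsTriangulation n t) :
    ∃ c, ∀ x y, Diag n t x y → Reach n t c x := by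
  obtain ⟨c, h0c, hcn, h1, h2⟩ := exists_apex (a := 0) (b := n - 1) hn ht (by omega)
    (side_mem hn ht (by omega))
  refine ⟨c, fun x y hxy => ?_⟩
  obtain ⟨hxy1, hyn, hne, hm⟩ := id hxy
  rcases chord_split ht h1 h2 hm (Nat.zero_le x) (by omega) with h | hyc | hcx
  · omega
  · have hd : Diag n t 0 c := ⟨by omega, by omega, by omega, h1⟩
    exact (hd.reach hn).symm.trans (reach_of_diag hn ht _ 0 c le_rfl hd x y (by omega) hyc hxy)
  · have hd : Diag n t c (n - 1) := ⟨by omega, by omega, by omega, h2⟩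
    exact reach_of_diag hn ht _ c (n - 1) le_rfl hd x y hcx (by omega) hxy

theorem exists_diag_iff (hn : 4 ≤ n) (ht : IsTriangulation n t) {x : ℕ} :
    (∃ e ∈ t, ¬ BoundaryEdge n e ∧ x ∈ e) ↔ ∃ y, Diag n t x y ∨ Diag n t y x := by
  constructor
  · rintro ⟨e, he, hb, hx⟩
    obtain ⟨y, rfl⟩ := exists_pair ht he hx
    obtain ⟨hxn, hyn, hne⟩ := lt_of_mem ht he
    rw [boundaryEdge_pair hn] at hb
    refine ⟨y, ?_⟩
    rcases lt_or_gt_of_ne hne with h | h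
    · exact Or.inl ⟨by omega, hyn, by omega, he⟩
    · exact Or.inr ⟨by omega, hxn, by omega, by rwa [Finset.pair_comm]⟩
  · rintro ⟨y, ⟨h1, h2, h3, h4⟩ | ⟨h1, h2, h3, h4⟩⟩
    · exact ⟨_, h4, by rw [boundaryEdge_pair hn]; omega, by simp⟩
    · exact ⟨_, h4, by rw [boundaryEdge_pair hn]; omega, by simp⟩

/-! ### Isolated vertices and ears -/

/-- A chord in `t`, if it cuts off only the vertex `v`, makes `v` the apex of an ear. -/
theorem isEarApex_of_mem (hn : 4 ≤ n) (ht : IsTriangulation n t) {u v w : ℕ} (huw : u < w)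
    (h : (u + 1 = v ∧ v + 1 = w ∧ w < n) ∨ (v = 0 ∧ u = 1 ∧ w + 1 = n) ∨
      (u = 0 ∧ w + 1 = v ∧ v + 1 = n)) (hm : ({u, w} : Finset ℕ) ∈ t) : IsEarApex n t v := by
  refine ⟨u, w, ⟨by omega, by omega, by omega, side_mem hn ht (by omega),
    side_mem hn ht (by omega), hm⟩, ?_, ?_⟩ <;> rw [boundaryEdge_pair hn] <;> omega

theorem isEarApex_of_isolated (hn : 4 ≤ n) (ht : IsTriangulation n t) {v : ℕ} (hv : v < n)
    (hiso : ∀ y, ¬ Diag n t v y ∧ ¬ Diag n t y v) : IsEarApex n t v := by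
  obtain ⟨u, w, huw, h⟩ : ∃ u w, u < w ∧
      ((u + 1 = v ∧ v + 1 = w ∧ w < n) ∨ (v = 0 ∧ u = 1 ∧ w + 1 = n) ∨
      (u = 0 ∧ w + 1 = v ∧ v + 1 = n)) := by
    by_cases h0 : v = 0
    · exact ⟨1, n - 1, by omega, by omega⟩
    by_cases h1 : v = n - 1
    · exact ⟨0, n - 2, by omega, by omega⟩
    exact ⟨v - 1, v + 1, by omega, by omega⟩
  rcases mem_or_interleave ht huw (by omega) with hm | ⟨x, y, hxy, hc⟩
  · exact isEarApex_of_mem hn ht huw h hm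
  · exfalso
    obtain ⟨hxn, hyn, -⟩ := lt_of_mem ht hxy
    have hd : Diag n t x y := ⟨by omega, hyn, by omega, hxy⟩
    -- The chord `{u, w}` has `v` as its only vertex on one side, so a crossing chord ends at `v`.
    have hvxy : x = v ∨ y = v := by omega
    rcases hvxy with rfl | rfl
    · exact (hiso y).1 hd
    · exact (hiso x).2 hd

theorem isolated_of_isEarApex (hn : 4 ≤ n) (ht : IsTriangulation n t) {v : ℕ}
    (h : IsEarApex n t v) (y : ℕ) : ¬ Diag n t v y ∧ ¬ Diag n t y v := by
  obtain ⟨u, w, ⟨-, -, huw, -, -, hm⟩, hb1, hb2⟩ := h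
  rw [boundaryEdge_pair hn] at hb1 hb2
  have hm' : ({w, u} : Finset ℕ) ∈ t := by rwa [Finset.pair_comm]
  constructor
  · rintro ⟨h1, h2, h3, h4⟩
    have := not_interleave ht hm h4
    have := not_interleave ht hm' h4
    have := not_interleave ht h4 hm
    have := not_interleave ht h4 hm'
    omega
  · rintro ⟨h1, h2, h3, h4⟩
    have := not_interleave ht hm h4
    have := not_interleave ht hm' h4
    have := not_interleave ht h4 hm
    have := not_interleave ht h4 hm'
    omega

end Triangulation

end BoundaryDeleted

/-- Delete all boundary edges from a triangulation `t` of a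
convex `n`-gon (`n ≥ 4`), keeping all `n` vertices. Then all endpoints of
diagonals lie in one connected component (which contains all diagonals), and a
vertex is isolated (lies on no diagonal) exactly when it is the apex of an ear
of `t`. -/
theorem boundary_deleted_components
    (n : ℕ) (hn : 4 ≤ n) (t : Set (Finset ℕ)) (ht : IsTriangulation n t) :
    (∀ x y : ℕ,
      (∃ e ∈ t, ¬ BoundaryEdge n e ∧ x ∈ e) →
      (∃ f ∈ t, ¬ BoundaryEdge n f ∧ y ∈ f) →
      GReach {v : ℕ | v < n} {e ∈ t | ¬ BoundaryEdge n e} x y) ∧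
    (∀ v : ℕ, v < n →
      ((¬ ∃ e ∈ t, ¬ BoundaryEdge n e ∧ v ∈ e) ↔ IsEarApex n t v)) := by
  have hdiag := fun x => BoundaryDeleted.exists_diag_iff hn ht (x := x)
  constructor
  · obtain ⟨c, hc⟩ := BoundaryDeleted.exists_hub hn ht
    have key : ∀ x, (∃ e ∈ t, ¬ BoundaryEdge n e ∧ x ∈ e) → BoundaryDeleted.Reach n t c x := by
      intro x hx
      obtain ⟨y, h | h⟩ := (hdiag x).mp hx
      · exact hc x y h
      · exact (hc y x h).trans (h.reach hn)
    intro x y hx hy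
    exact (key x hx).symm.trans (key y hy)
  · intro v hv
    rw [hdiag v]
    push Not
    refine ⟨fun h => ?_, fun h y => BoundaryDeleted.isolated_of_isEarApex hn ht h y⟩
    exact BoundaryDeleted.isEarApex_of_isolated hn ht hv h
end
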